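/- arXiv:2102.13417 — 5 statements merged into one kernel-verified Lean document; each statement's English description precedes it below -/
import Mathlib

section
/- Let 0 < r ≤ 1 and let m(α,β) := (cos α cos β, cos α sin β, sin α) ∈ ℝ³. Define the 2×2 complex matrix family ρ(α,β) := (1/2)(I + r m(α,β)·σ), and set L_α := r (∂_α m)·σ and L_β := r (∂_β m)·σ. Then: (i) ∂_α ρ = (ρ L_α + L_α ρ)/2 and ∂_β ρ = (ρ L_β + L_β ρ)/2, i.e. L_α and L_β are symmetric logarithmic derivatives of the family; (ii) the quantum Fisher information matrix F with entries F_{ij} := (1/2) Tr[ρ (L_i L_j + L_j L_i)] (i,j ∈ {α,β}) equals diag(r², r² cos²α); (iii) the matrix A with entries A_{ij} := (1/(2i)) Tr[ρ (L_i L_j − L_j L_i)] equals [[0, −r³ cos α], [r³ cos α, 0]]. (Explicit SLDs, QFI and mean-commutator matrix for the depolarized-qubit two-phase model of the paper, with Bloch radius r = |λ|√(2 Tr ρ² − 1).) -/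
open Matrix

/-- Pauli matrix σ₁. -/
noncomputable def pauli1 : Matrix (Fin 2) (Fin 2) ℂ := !![0, 1; 1, 0]

/-- Pauli matrix σ₂. -/
noncomputable def pauli2 : Matrix (Fin 2) (Fin 2) ℂ := !![0, -Complex.I; Complex.I, 0]

/-- Pauli matrix σ₃. -/
noncomputable def pauli3 : Matrix (Fin 2) (Fin 2) ℂ := !![1, 0; 0, -1]

/-- `v ⬝ σ` for a real vector `v ∈ ℝ³`. -/
noncomputable def dotSigma (v : Fin 3 → ℝ) : Matrix (Fin 2) (Fin 2) ℂ :=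
  (v 0 : ℂ) • pauli1 + (v 1 : ℂ) • pauli2 + (v 2 : ℂ) • pauli3

/-- Unit Bloch vector `m(α,β) = (cos α cos β, cos α sin β, sin α)`. -/
noncomputable def blochDir (α β : ℝ) : Fin 3 → ℝ :=
  ![Real.cos α * Real.cos β, Real.cos α * Real.sin β, Real.sin α]

/-- `∂_α m(α,β)`. -/
noncomputable def dAlphaBlochDir (α β : ℝ) : Fin 3 → ℝ :=
  ![-(Real.sin α * Real.cos β), -(Real.sin α * Real.sin β), Real.cos α]

/-- `∂_β m(α,β)`. -/
noncomputable def dBetaBlochDir (α β : ℝ) : Fin 3 → ℝ :=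
  ![-(Real.cos α * Real.sin β), Real.cos α * Real.cos β, 0]

/-- The qubit state family `ρ(α,β) = (1/2)(I + r m(α,β)·σ)`. -/
noncomputable def qubitRho (r α β : ℝ) : Matrix (Fin 2) (Fin 2) ℂ :=
  (2 : ℂ)⁻¹ • (1 + dotSigma (r • blochDir α β))

/-- The pair of SLD candidates `L_α = r (∂_α m)·σ` and `L_β = r (∂_β m)·σ`. -/
noncomputable def qubitSLD (r α β : ℝ) : Fin 2 → Matrix (Fin 2) (Fin 2) ℂ :=
  ![dotSigma (r • dAlphaBlochDir α β), dotSigma (r • dBetaBlochDir α β)]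

/-!
Moving the Bloch vector `w` on a sphere about the origin makes its velocity `v` orthogonal to `w`.
Then `w·σ` and `v·σ` anticommute, so only the identity component of the state contributes to its
anticommutator with `v·σ`, which makes `v·σ` a symmetric logarithmic derivative. By
`(u·σ)(v·σ) = (u·v) 1 + i (u × v)·σ`, the quantum Fisher information is the Gram matrix of the
velocities, and the mean commutator is the triple product of `w` with two velocities. For a sphere
of radius `r` in latitude and longitude these are the round metric and, up to sign, `r` times its
area form.
-/

/-- `L` is a symmetric logarithmic derivative at `θ` of the one-parameter family of matrices `ρ`:
it is Hermitian and `∂ρ = (ρ L + L ρ) / 2`. The derivative is taken entrywise, so that no norm on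
matrices has to be chosen. -/
def IsSLDAt {n : Type*} [Fintype n] (ρ : ℝ → Matrix n n ℂ) (L : Matrix n n ℂ) (θ : ℝ) : Prop :=
  L.IsHermitian ∧
    ∀ i j, HasDerivAt (fun t => ρ t i j) (((2 : ℂ)⁻¹ • (ρ θ * L + L * ρ θ)) i j) θ

/-- The quantum Fisher information matrix `F i j = Tr[ρ (L i * L j + L j * L i)] / 2` of a state `ρ`
with symmetric logarithmic derivatives `L`. -/
noncomputable def quantumFisherInfo {ι n : Type*} [Fintype n] (ρ : Matrix n n ℂ)
    (L : ι → Matrix n n ℂ) : Matrix ι ι ℂ :=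
  of fun i j => (2 : ℂ)⁻¹ * (ρ * (L i * L j + L j * L i)).trace

/-- The mean-commutator matrix `A i j = Tr[ρ (L i * L j - L j * L i)] / (2 √-1)` of a state `ρ`
with symmetric logarithmic derivatives `L`. It measures their incompatibility. -/
noncomputable def meanCommutator {ι n : Type*} [Fintype n] (ρ : Matrix n n ℂ)
    (L : ι → Matrix n n ℂ) : Matrix ι ι ℂ :=
  of fun i j => (2 * Complex.I)⁻¹ * (ρ * (L i * L j - L j * L i)).trace

/-- The qubit operator `(1 + w·σ) / 2` with Bloch vector `w`; a density matrix when `w` lies in the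
Euclidean unit ball. -/
noncomputable def blochState (w : Fin 3 → ℝ) : Matrix (Fin 2) (Fin 2) ℂ :=
  (2 : ℂ)⁻¹ • (1 + dotSigma w)

section PauliAlgebra

variable (u v : Fin 3 → ℝ)

theorem dotSigma_eq_of :
    dotSigma v = !![(v 2 : ℂ), v 0 - v 1 * Complex.I; v 0 + v 1 * Complex.I, -(v 2 : ℂ)] := by
  ext i j
  fin_cases i <;> fin_cases j <;> simp [dotSigma, pauli1, pauli2, pauli3, sub_eq_add_neg]

theorem isHermitian_dotSigma : (dotSigma v).IsHermitian := by
  rw [dotSigma_eq_of]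
  ext i j
  fin_cases i <;> fin_cases j <;> simp [sub_eq_add_neg]

theorem trace_dotSigma : (dotSigma v).trace = 0 := by
  simp [dotSigma_eq_of, trace_fin_two]

theorem dotSigma_neg : dotSigma (-v) = -dotSigma v := by
  simp only [dotSigma, Pi.neg_apply, Complex.ofReal_neg]
  module

theorem dotSigma_mul_dotSigma :
    dotSigma u * dotSigma v = ((u ⬝ᵥ v : ℝ) : ℂ) • 1 + Complex.I • dotSigma (u ⨯₃ v) := by
  ext i j
  fin_cases i <;> fin_cases j <;>
    simp only [Fin.zero_eta, Fin.mk_one, dotSigma_eq_of, cross_apply, vec3_dotProduct, mul_fin_two,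
      one_fin_two, Matrix.add_apply, Matrix.smul_apply, smul_eq_mul, of_apply, cons_val,
      cons_val', empty_val', cons_val_fin_one, Complex.ofReal_add, Complex.ofReal_sub,
      Complex.ofReal_mul]
  · linear_combination -(u 1 * v 1 : ℂ) * Complex.I_sq
  · linear_combination (u 2 * v 0 - u 0 * v 2 : ℂ) * Complex.I_sq
  · linear_combination -(u 2 * v 0 - u 0 * v 2 : ℂ) * Complex.I_sq
  · linear_combination -(u 1 * v 1 : ℂ) * Complex.I_sq

theorem dotSigma_anticommutator :
    dotSigma u * dotSigma v + dotSigma v * dotSigma u = (2 * ((u ⬝ᵥ v : ℝ) : ℂ)) • 1 := by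
  rw [dotSigma_mul_dotSigma, dotSigma_mul_dotSigma, dotProduct_comm v u, ← cross_anticomm u v,
    dotSigma_neg]
  module

theorem dotSigma_commutator :
    dotSigma u * dotSigma v - dotSigma v * dotSigma u =
      (2 * Complex.I) • dotSigma (u ⨯₃ v) := by
  rw [dotSigma_mul_dotSigma, dotSigma_mul_dotSigma, dotProduct_comm v u, ← cross_anticomm u v,
    dotSigma_neg]
  module

end PauliAlgebra

section BlochState

variable {ι : Type*} (w : Fin 3 → ℝ)

theorem trace_blochState : (blochState w).trace = 1 := by
  simp [blochState, trace_dotSigma]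

theorem trace_blochState_mul_dotSigma (v : Fin 3 → ℝ) :
    (blochState w * dotSigma v).trace = ((w ⬝ᵥ v : ℝ) : ℂ) := by
  simp [blochState, add_mul, dotSigma_mul_dotSigma, trace_dotSigma, mul_comm]

theorem quantumFisherInfo_blochState_apply (v : ι → Fin 3 → ℝ) (i j : ι) :
    quantumFisherInfo (blochState w) (fun k => dotSigma (v k)) i j = ((v i ⬝ᵥ v j : ℝ) : ℂ) := by
  simp [quantumFisherInfo, dotSigma_anticommutator, trace_blochState]

theorem meanCommutator_blochState_apply (v : ι → Fin 3 → ℝ) (i j : ι) :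
    meanCommutator (blochState w) (fun k => dotSigma (v k)) i j =
      ((w ⬝ᵥ v i ⨯₃ v j : ℝ) : ℂ) := by
  rw [meanCommutator, of_apply, dotSigma_commutator, mul_smul_comm, trace_smul,
    trace_blochState_mul_dotSigma, smul_eq_mul, inv_mul_cancel_left₀ (by simp)]

variable {w} in
theorem blochState_anticommutator_dotSigma {v : Fin 3 → ℝ} (h : w ⬝ᵥ v = 0) :
    blochState w * dotSigma v + dotSigma v * blochState w = dotSigma v := by
  have hanti : dotSigma w * dotSigma v + dotSigma v * dotSigma w = 0 := by
    simp [dotSigma_anticommutator, h]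
  calc blochState w * dotSigma v + dotSigma v * blochState w
      = dotSigma v + (2 : ℂ)⁻¹ • (dotSigma w * dotSigma v + dotSigma v * dotSigma w) := by
        simp only [blochState, smul_mul_assoc, mul_smul_comm, add_mul, mul_add, one_mul, mul_one]
        module
    _ = dotSigma v := by rw [hanti, smul_zero, add_zero]

end BlochState

section BlochCurve

variable {w : ℝ → Fin 3 → ℝ} {w' : Fin 3 → ℝ} {t : ℝ}

theorem hasDerivAt_dotSigma_apply (h : HasDerivAt w w' t) (i j : Fin 2) :
    HasDerivAt (fun s => dotSigma (w s) i j) (dotSigma w' i j) t := by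
  have hw (k : Fin 3) : HasDerivAt (fun s => (w s k : ℂ)) (w' k) t :=
    (hasDerivAt_pi.1 h k).ofReal_comp
  simp only [dotSigma, Matrix.add_apply, Matrix.smul_apply, smul_eq_mul]
  exact (((hw 0).mul_const _).add ((hw 1).mul_const _)).add ((hw 2).mul_const _)

theorem hasDerivAt_blochState_apply (h : HasDerivAt w w' t) (i j : Fin 2) :
    HasDerivAt (fun s => blochState (w s) i j) (((2 : ℂ)⁻¹ • dotSigma w') i j) t :=
  ((hasDerivAt_dotSigma_apply h i j).const_add _).const_mul _

theorem isSLDAt_blochState (h : HasDerivAt w w' t) (horth : w t ⬝ᵥ w' = 0) :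
    IsSLDAt (fun s => blochState (w s)) (dotSigma w') t := by
  refine ⟨isHermitian_dotSigma w', ?_⟩
  rw [blochState_anticommutator_dotSigma horth]
  exact hasDerivAt_blochState_apply h

end BlochCurve

section BlochDir

variable (α β : ℝ)

theorem hasDerivAt_blochDir_left :
    HasDerivAt (fun a => blochDir a β) (dAlphaBlochDir α β) α := by
  refine hasDerivAt_pi.2 fun k => ?_
  fin_cases k
  · simpa [blochDir, dAlphaBlochDir] using (Real.hasDerivAt_cos α).mul_const (Real.cos β)
  · simpa [blochDir, dAlphaBlochDir] using (Real.hasDerivAt_cos α).mul_const (Real.sin β)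
  · simpa [blochDir, dAlphaBlochDir] using Real.hasDerivAt_sin α

theorem hasDerivAt_blochDir_right :
    HasDerivAt (fun b => blochDir α b) (dBetaBlochDir α β) β := by
  refine hasDerivAt_pi.2 fun k => ?_
  fin_cases k
  · simpa [blochDir, dBetaBlochDir] using (Real.hasDerivAt_cos β).const_mul (Real.cos α)
  · simpa [blochDir, dBetaBlochDir] using (Real.hasDerivAt_sin β).const_mul (Real.cos α)
  · simpa [blochDir, dBetaBlochDir] using hasDerivAt_const β (Real.sin α)

theorem blochDir_dotProduct_self : blochDir α β ⬝ᵥ blochDir α β = 1 := by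
  simp only [blochDir, vec3_dotProduct, cons_val]
  linear_combination Real.cos α ^ 2 * Real.sin_sq_add_cos_sq β + Real.sin_sq_add_cos_sq α

theorem blochDir_dotProduct_dAlphaBlochDir : blochDir α β ⬝ᵥ dAlphaBlochDir α β = 0 := by
  simp only [blochDir, dAlphaBlochDir, vec3_dotProduct, cons_val]
  linear_combination -(Real.cos α * Real.sin α) * Real.sin_sq_add_cos_sq β

theorem blochDir_dotProduct_dBetaBlochDir : blochDir α β ⬝ᵥ dBetaBlochDir α β = 0 := by
  simp only [blochDir, dBetaBlochDir, vec3_dotProduct, cons_val]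
  ring

theorem dAlphaBlochDir_dotProduct_self : dAlphaBlochDir α β ⬝ᵥ dAlphaBlochDir α β = 1 := by
  simp only [dAlphaBlochDir, vec3_dotProduct, cons_val]
  linear_combination Real.sin α ^ 2 * Real.sin_sq_add_cos_sq β + Real.sin_sq_add_cos_sq α

theorem dBetaBlochDir_dotProduct_self :
    dBetaBlochDir α β ⬝ᵥ dBetaBlochDir α β = Real.cos α ^ 2 := by
  simp only [dBetaBlochDir, vec3_dotProduct, cons_val]
  linear_combination Real.cos α ^ 2 * Real.sin_sq_add_cos_sq β

theorem dAlphaBlochDir_dotProduct_dBetaBlochDir :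
    dAlphaBlochDir α β ⬝ᵥ dBetaBlochDir α β = 0 := by
  simp only [dAlphaBlochDir, dBetaBlochDir, vec3_dotProduct, cons_val]
  ring

theorem dAlphaBlochDir_cross_dBetaBlochDir :
    dAlphaBlochDir α β ⨯₃ dBetaBlochDir α β = -Real.cos α • blochDir α β := by
  ext k
  fin_cases k <;>
    simp only [Fin.zero_eta, Fin.mk_one, Fin.reduceFinMk, blochDir, dAlphaBlochDir, dBetaBlochDir,
      cross_apply, Pi.smul_apply, smul_eq_mul, cons_val]
  · ring
  · ring
  · linear_combination -(Real.sin α * Real.cos α) * Real.sin_sq_add_cos_sq β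

theorem blochDir_dotProduct_dAlphaBlochDir_cross_dBetaBlochDir :
    blochDir α β ⬝ᵥ dAlphaBlochDir α β ⨯₃ dBetaBlochDir α β = -Real.cos α := by
  rw [dAlphaBlochDir_cross_dBetaBlochDir, dotProduct_smul, blochDir_dotProduct_self, smul_eq_mul,
    mul_one]

end BlochDir

section TwoPhaseModel

variable (r α β : ℝ)

theorem qubitRho_eq_blochState : qubitRho r α β = blochState (r • blochDir α β) := rfl

theorem qubitSLD_eq_dotSigma :
    qubitSLD r α β = fun k => dotSigma (r • ![dAlphaBlochDir α β, dBetaBlochDir α β] k) := by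
  ext1 k
  fin_cases k <;> rfl

theorem isSLDAt_qubitRho_left :
    IsSLDAt (fun a => qubitRho r a β) (qubitSLD r α β 0) α :=
  isSLDAt_blochState ((hasDerivAt_blochDir_left α β).const_smul r)
    (by simp [blochDir_dotProduct_dAlphaBlochDir])

theorem isSLDAt_qubitRho_right :
    IsSLDAt (fun b => qubitRho r α b) (qubitSLD r α β 1) β :=
  isSLDAt_blochState ((hasDerivAt_blochDir_right α β).const_smul r)
    (by simp [blochDir_dotProduct_dBetaBlochDir])

theorem quantumFisherInfo_qubitRho :
    quantumFisherInfo (qubitRho r α β) (qubitSLD r α β) =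
      !![((r ^ 2 : ℝ) : ℂ), 0; 0, ((r ^ 2 * Real.cos α ^ 2 : ℝ) : ℂ)] := by
  have hαβ := dAlphaBlochDir_dotProduct_dBetaBlochDir α β
  have hβα := (dotProduct_comm _ _).trans hαβ
  ext i j
  rw [qubitRho_eq_blochState, qubitSLD_eq_dotSigma, quantumFisherInfo_blochState_apply]
  fin_cases i <;> fin_cases j <;>
    simp [dAlphaBlochDir_dotProduct_self, dBetaBlochDir_dotProduct_self, hαβ, hβα, pow_succ,
      mul_assoc]

theorem meanCommutator_qubitRho :
    meanCommutator (qubitRho r α β) (qubitSLD r α β) =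
      !![0, -((r ^ 3 * Real.cos α : ℝ) : ℂ); ((r ^ 3 * Real.cos α : ℝ) : ℂ), 0] := by
  have hαβ := blochDir_dotProduct_dAlphaBlochDir_cross_dBetaBlochDir α β
  have hβα : blochDir α β ⬝ᵥ dBetaBlochDir α β ⨯₃ dAlphaBlochDir α β = Real.cos α := by
    rw [← cross_anticomm, dotProduct_neg, hαβ, neg_neg]
  ext i j
  rw [qubitRho_eq_blochState, qubitSLD_eq_dotSigma, meanCommutator_blochState_apply]
  fin_cases i <;> fin_cases j <;> simp [hαβ, hβα, pow_succ, mul_assoc]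

theorem qubit_two_phase_model_SLD_QFI_meanCommutator_general :
    IsSLDAt (fun a => qubitRho r a β) (qubitSLD r α β 0) α ∧
    IsSLDAt (fun b => qubitRho r α b) (qubitSLD r α β 1) β ∧
    quantumFisherInfo (qubitRho r α β) (qubitSLD r α β) =
      !![((r ^ 2 : ℝ) : ℂ), 0; 0, ((r ^ 2 * Real.cos α ^ 2 : ℝ) : ℂ)] ∧
    meanCommutator (qubitRho r α β) (qubitSLD r α β) =
      !![0, -((r ^ 3 * Real.cos α : ℝ) : ℂ); ((r ^ 3 * Real.cos α : ℝ) : ℂ), 0] :=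
  ⟨isSLDAt_qubitRho_left r α β, isSLDAt_qubitRho_right r α β, quantumFisherInfo_qubitRho r α β,
    meanCommutator_qubitRho r α β⟩

end TwoPhaseModel

theorem qubit_two_phase_model_SLD_QFI_meanCommutator
    (r α β : ℝ) (hr0 : 0 < r) (hr1 : r ≤ 1) :
    -- (i) L_α is an SLD: ∂_α ρ = (ρ L_α + L_α ρ)/2, entrywise in α
    (∀ i j : Fin 2, HasDerivAt (fun a => qubitRho r a β i j)
      (((2 : ℂ)⁻¹ • (qubitRho r α β * qubitSLD r α β 0 +
          qubitSLD r α β 0 * qubitRho r α β)) i j) α) ∧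
    -- (i) L_β is an SLD: ∂_β ρ = (ρ L_β + L_β ρ)/2, entrywise in β
    (∀ i j : Fin 2, HasDerivAt (fun b => qubitRho r α b i j)
      (((2 : ℂ)⁻¹ • (qubitRho r α β * qubitSLD r α β 1 +
          qubitSLD r α β 1 * qubitRho r α β)) i j) β) ∧
    -- (ii) the QFI matrix equals diag(r², r² cos²α)
    (∀ i j : Fin 2, (2 : ℂ)⁻¹ *
        (qubitRho r α β * (qubitSLD r α β i * qubitSLD r α β j +
          qubitSLD r α β j * qubitSLD r α β i)).trace =
      !![((r ^ 2 : ℝ) : ℂ), 0; 0, ((r ^ 2 * Real.cos α ^ 2 : ℝ) : ℂ)] i j) ∧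
    -- (iii) the mean-commutator matrix equals [[0, −r³ cos α], [r³ cos α, 0]]
    (∀ i j : Fin 2, (2 * Complex.I)⁻¹ *
        (qubitRho r α β * (qubitSLD r α β i * qubitSLD r α β j -
          qubitSLD r α β j * qubitSLD r α β i)).trace =
      !![0, -((r ^ 3 * Real.cos α : ℝ) : ℂ); ((r ^ 3 * Real.cos α : ℝ) : ℂ), 0] i j) := by
  obtain ⟨hα, hβ, hF, hA⟩ := qubit_two_phase_model_SLD_QFI_meanCommutator_general r α β
  exact ⟨hα.2, hβ.2, congrFun₂ hF, congrFun₂ hA⟩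
end

section
/- Let D ≥ 2, let P and P′ be D×D complex Hermitian matrices with P² = P and P′ = PP′ + P′P, and let λ be a real number with 2 + λ(D−2) ≠ 0. Set ρ := λP + (1−λ)·I/D and c := λD/(2 + λ(D−2)). Then the Hermitian matrix L := 2c P′ satisfies ρL + Lρ = 2λP′. (Hence for the locally depolarized pure-state family ρ_θ = λ|ψ_θ⟩⟨ψ_θ| + (1−λ)I/D, whose derivative is λP′ with P′ = ∂(|ψ_θ⟩⟨ψ_θ|), the symmetric logarithmic derivative is L(θ,λ) = [λD/(2+λ(D−2))]·L(θ), where L(θ) = 2P′ is the SLD of the noiseless pure state.) -/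
open Matrix

/-- Depolarized state `ρ = λ P + (1−λ) I/D`. -/
noncomputable def depolState (D : ℕ) (lam : ℝ) (P : Matrix (Fin D) (Fin D) ℂ) :
    Matrix (Fin D) (Fin D) ℂ :=
  (lam : ℂ) • P + (((1 - lam) / (D : ℝ) : ℝ) : ℂ) • (1 : Matrix (Fin D) (Fin D) ℂ)

/-! The anticommutator with `P` fixes `P'` and the anticommutator with `1` doubles it. Hence `P'` is
an eigenvector of the anticommutator with `ρ`, with eigenvalue `λ + 2 (1 - λ) / D`, and the SLD is
`2 λ P'` divided by this eigenvalue. -/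

section Anticommutator

variable {R A : Type*} [CommSemiring R]

theorem smul_anticommutator_eq_smul [NonUnitalNonAssocSemiring A] [Module R A]
    [IsScalarTower R A A] [SMulCommClass R A A] {r x : A} {μ : R}
    (hx : r * x + x * r = μ • x) (k : R) :
    r * (k • x) + (k • x) * r = (k * μ) • x := by
  rw [mul_smul_comm, smul_mul_assoc, ← smul_add, hx, smul_smul]

theorem smul_add_smul_one_anticommutator_eq_smul [NonAssocSemiring A] [Module R A]
    [IsScalarTower R A A] [SMulCommClass R A A] {p x : A} {μ : R}
    (hx : p * x + x * p = μ • x) (a b : R) :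
    (a • p + b • 1) * x + x * (a • p + b • 1) = (a * μ + 2 * b) • x :=
  calc (a • p + b • 1) * x + x * (a • p + b • 1)
      = a • (p * x + x * p) + (2 * b) • x := by
        simp only [add_mul, mul_add, smul_mul_assoc, mul_smul_comm, one_mul, mul_one]
        module
    _ = (a * μ + 2 * b) • x := by rw [hx, smul_smul, add_smul]

end Anticommutator

section Depolarized

variable {K A : Type*} [Field K]

theorem depolarization_factor_mul_eigenvalue {d l : K} (hd : d ≠ 0) (hs : 2 + l * (d - 2) ≠ 0) :
    l * d / (2 + l * (d - 2)) * (l + 2 * ((1 - l) / d)) = l := by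
  field_simp
  ring

variable [NonAssocSemiring A] [Module K A] [IsScalarTower K A A] [SMulCommClass K A A]

theorem sld_of_depolarized_pure_state_general {p p' : A} (hder : p' = p * p' + p' * p)
    {d l : K} (hd : d ≠ 0) (hs : 2 + l * (d - 2) ≠ 0) :
    (l • p + ((1 - l) / d) • 1) * ((2 * (l * d / (2 + l * (d - 2)))) • p') +
      ((2 * (l * d / (2 + l * (d - 2)))) • p') * (l • p + ((1 - l) / d) • 1) =
    (2 * l) • p' := by
  have p'_fixed : p * p' + p' * p = (1 : K) • p' := by rw [← hder, one_smul]
  have p'_eigenvector := smul_add_smul_one_anticommutator_eq_smul p'_fixed l ((1 - l) / d)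
  rw [smul_anticommutator_eq_smul p'_eigenvector, mul_one, mul_assoc,
    depolarization_factor_mul_eigenvalue hd hs]

end Depolarized

theorem sld_of_depolarized_pure_state (D : ℕ) (hD : 2 ≤ D)
    (P P' : Matrix (Fin D) (Fin D) ℂ)
    (hP : P.IsHermitian) (hP' : P'.IsHermitian)
    (hproj : P * P = P) (hder : P' = P * P' + P' * P)
    (lam : ℝ) (hs : 2 + lam * ((D : ℝ) - 2) ≠ 0) :
    depolState D lam P * (((2 * (lam * D / (2 + lam * ((D : ℝ) - 2))) : ℝ) : ℂ) • P') +
      (((2 * (lam * D / (2 + lam * ((D : ℝ) - 2))) : ℝ) : ℂ) • P') * depolState D lam P =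
    ((2 * lam : ℝ) : ℂ) • P' := by
  simp only [depolState, Complex.coe_smul]
  exact sld_of_depolarized_pure_state_general hder (by positivity) hs
end

section
/- Let D ≥ 2, let P be a D×D complex Hermitian matrix with P² = P, let L₁, L₂ be D×D complex Hermitian matrices satisfying L₁ = PL₁ + L₁P and L₂ = PL₂ + L₂P, and let λ be real with s := 2 + λ(D−2) ≠ 0. Set ρ := λP + (1−λ)·I/D and c := λD/s. Then (1/2)·Tr[ρ (cL₁·cL₂ + cL₂·cL₁)] = (λ²D/s) · (1/2)·Tr[P(L₁L₂ + L₂L₁)]. (Scaling of the quantum Fisher information matrix under depolarization: F(θ,λ) = [λ²D/(2+λ(D−2))] · F(θ).) -/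
open Matrix

/-! By cyclicity of the trace, `A = P A + A P` makes the identity weigh the anticommutator of `A`
with any matrix exactly twice as much as `P` does. Against it the state `λ P + (1 - λ) I/D`
therefore acts as `(λ + 2 (1 - λ)/D) P = (s/D) P`, where `s = 2 + λ (D - 2)`, and the two factors
`λ D/s` from the logarithmic derivatives turn `s/D` into `λ² D/s`. -/

section Trace

variable {n R : Type*} [Fintype n] [CommSemiring R] {P A : Matrix n n R}

theorem trace_mul_eq_trace_mul_anticommutator (hA : A = P * A + A * P) (B : Matrix n n R) :
    (A * B).trace = (P * (A * B + B * A)).trace :=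
  calc (A * B).trace
    _ = ((P * A + A * P) * B).trace := by rw [← hA]
    _ = (P * A * B).trace + (A * P * B).trace := by rw [add_mul, trace_add]
    _ = (P * (A * B)).trace + (P * (B * A)).trace := by
      rw [mul_assoc P A B, ← trace_mul_cycle P B A, mul_assoc P B A]
    _ = (P * (A * B + B * A)).trace := by rw [mul_add, trace_add]

theorem trace_anticommutator_eq_two_mul (hA : A = P * A + A * P) (B : Matrix n n R) :
    (A * B + B * A).trace = 2 * (P * (A * B + B * A)).trace := by
  rw [trace_add, trace_mul_comm B A, ← two_mul, trace_mul_eq_trace_mul_anticommutator hA]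

theorem trace_smul_add_smul_one_mul_anticommutator [DecidableEq n] (hA : A = P * A + A * P)
    (B : Matrix n n R) (a b : R) :
    ((a • P + b • (1 : Matrix n n R)) * (A * B + B * A)).trace =
      (a + 2 * b) * (P * (A * B + B * A)).trace := by
  rw [add_mul, smul_mul_assoc, smul_mul_assoc, one_mul, trace_add, trace_smul, trace_smul,
    trace_anticommutator_eq_two_mul hA, smul_eq_mul, smul_eq_mul]
  ring

end Trace

theorem anticommutator_smul_smul {R M : Type*} [Monoid R] [NonUnitalNonAssocSemiring M]
    [DistribMulAction R M] [IsScalarTower R M M] [SMulCommClass R M M] (c : R) (x y : M) :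
    c • x * (c • y) + c • y * (c • x) = c ^ 2 • (x * y + y * x) := by
  rw [smul_mul_smul_comm, smul_mul_smul_comm, ← smul_add, sq]

theorem qfi_scaling_under_depolarization_general {n K : Type*} [Fintype n] [DecidableEq n]
    [Field K] {P A : Matrix n n K} (hA : A = P * A + A * P) (B : Matrix n n K) {d lam : K}
    (hd : d ≠ 0) (hs : 2 + lam * (d - 2) ≠ 0) :
    ((lam • P + ((1 - lam) / d) • (1 : Matrix n n K)) *
        ((lam * d / (2 + lam * (d - 2))) • A * ((lam * d / (2 + lam * (d - 2))) • B) +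
          (lam * d / (2 + lam * (d - 2))) • B * ((lam * d / (2 + lam * (d - 2))) • A))).trace =
      lam ^ 2 * d / (2 + lam * (d - 2)) * (P * (A * B + B * A)).trace := by
  have hweight : lam + 2 * ((1 - lam) / d) = (2 + lam * (d - 2)) / d := by
    field_simp
    ring
  rw [anticommutator_smul_smul, mul_smul_comm, trace_smul, smul_eq_mul,
    trace_smul_add_smul_one_mul_anticommutator hA, hweight]
  field_simp

theorem qfi_scaling_under_depolarization (D : ℕ) (hD : 2 ≤ D)
    (P L₁ L₂ : Matrix (Fin D) (Fin D) ℂ)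
    (hP : P.IsHermitian) (hproj : P * P = P)
    (hL₁ : L₁.IsHermitian) (hL₂ : L₂.IsHermitian)
    (hL₁P : L₁ = P * L₁ + L₁ * P) (hL₂P : L₂ = P * L₂ + L₂ * P)
    (lam : ℝ) (hs : 2 + lam * ((D : ℝ) - 2) ≠ 0) :
    (2 : ℂ)⁻¹ * (depolState D lam P *
        (((lam * D / (2 + lam * ((D : ℝ) - 2)) : ℝ) : ℂ) • L₁ *
            ((((lam * D / (2 + lam * ((D : ℝ) - 2))) : ℝ) : ℂ) • L₂) +
          (((lam * D / (2 + lam * ((D : ℝ) - 2)) : ℝ) : ℂ) • L₂ *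
            ((((lam * D / (2 + lam * ((D : ℝ) - 2))) : ℝ) : ℂ) • L₁)))).trace =
    ((lam ^ 2 * (D : ℝ) / (2 + lam * ((D : ℝ) - 2)) : ℝ) : ℂ) *
      ((2 : ℂ)⁻¹ * (P * (L₁ * L₂ + L₂ * L₁)).trace) := by
  push_cast [depolState]
  rw [qfi_scaling_under_depolarization_general hL₁P L₂ (mod_cast (by omega : D ≠ 0)) (mod_cast hs),
    mul_left_comm]
end

section
/- Let D ≥ 1, let ψ := (1/√D) Σ_{i=1}^D e_i ⊗ e_i ∈ ℂ^D ⊗ ℂ^D be the maximally entangled state (e_i the standard basis), and let H, K be D×D traceless Hermitian complex matrices. Define φ_H := (I ⊗ H)ψ and φ_K := (I ⊗ K)ψ. Then the complex number ⟨φ_H, φ_K⟩ − ⟨φ_H, ψ⟩⟨ψ, φ_K⟩ is real and equals (1/(2D))·Tr(HK + KH). (Hence for the ancilla-assisted encoding ψ_θ = (I ⊗ U_θ)ψ the mean-commutator matrix vanishes identically, A_{lm}(θ) = 0, and the quantum Fisher information matrix is F_{lm}(θ) = 2 Tr({H_l, H_m})/D: a maximally entangled probe with ancilla yields a fully compatible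 model, ℐ(θ) = 0 for all θ.) -/
open Matrix
open scoped Kronecker

/-- The maximally entangled state `ψ = (1/√D) Σᵢ eᵢ ⊗ eᵢ` of `ℂ^D ⊗ ℂ^D`,
as a vector indexed by `Fin D × Fin D`. -/
noncomputable def maxEnt (D : ℕ) : Fin D × Fin D → ℂ :=
  fun p => if p.1 = p.2 then (((Real.sqrt D)⁻¹ : ℝ) : ℂ) else 0

/-- `φ_H = (I ⊗ H) ψ` for the maximally entangled state `ψ`. -/
noncomputable def ancillaTangent (D : ℕ) (H : Matrix (Fin D) (Fin D) ℂ) :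
    Fin D × Fin D → ℂ :=
  ((1 : Matrix (Fin D) (Fin D) ℂ) ⊗ₖ H).mulVec (maxEnt D)

/-!
Up to the factor `1/√D`, the state `ψ` is the vectorization of the identity matrix, and hence
`(I ⊗ H) ψ` is the vectorization of `H`. Overlaps of tangent vectors are therefore normalized
Hilbert–Schmidt products, which on Hermitian matrices are real because the trace is cyclic. The
projection onto `ψ` contributes only the product of the normalized traces.
-/

/-- The quantum geometric tensor `⟨u, v⟩ - ⟨u, ψ⟩⟨ψ, v⟩` of tangent vectors `u`, `v` at `ψ`: four
times its real and imaginary parts are the entries of the quantum Fisher information and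
mean-commutator matrices. No normalization of `ψ` is built in. -/
def quantumGeometricTensor {n R : Type*} [Fintype n] [Ring R] [Star R] (ψ u v : n → R) : R :=
  star u ⬝ᵥ v - (star u ⬝ᵥ ψ) * (star ψ ⬝ᵥ v)

section HermitianTrace

variable {n R : Type*} [Fintype n] {A B : Matrix n n R}

theorem isSelfAdjoint_trace_of_isHermitian [AddCommMonoid R] [StarAddMonoid R]
    (hA : A.IsHermitian) : IsSelfAdjoint A.trace := by
  rw [isSelfAdjoint_iff, ← trace_conjTranspose, hA.eq]

theorem isSelfAdjoint_trace_mul_of_isHermitian [NonUnitalCommSemiring R] [StarRing R]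
    (hA : A.IsHermitian) (hB : B.IsHermitian) : IsSelfAdjoint (A * B).trace := by
  rw [isSelfAdjoint_iff, ← trace_conjTranspose, conjTranspose_mul, hA.eq, hB.eq, trace_mul_comm]

end HermitianTrace

section MaximallyEntangled

variable (D : ℕ) (H K : Matrix (Fin D) (Fin D) ℂ)

theorem maxEnt_eq_smul_vec_one :
    maxEnt D = (Real.sqrt D)⁻¹ • vec (1 : Matrix (Fin D) (Fin D) ℂ) := by
  ext ⟨i, j⟩
  simp [maxEnt, one_apply, eq_comm]

theorem ancillaTangent_eq_smul_vec : ancillaTangent D H = (Real.sqrt D)⁻¹ • vec H := by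
  rw [ancillaTangent, maxEnt_eq_smul_vec_one, mulVec_smul, ← vec_mul_eq_mulVec, Matrix.mul_one]

theorem ancillaTangent_one : ancillaTangent D 1 = maxEnt D := by
  rw [ancillaTangent_eq_smul_vec, maxEnt_eq_smul_vec_one]

theorem star_ancillaTangent_dotProduct_ancillaTangent :
    star (ancillaTangent D H) ⬝ᵥ ancillaTangent D K = (D : ℂ)⁻¹ * (Hᴴ * K).trace := by
  have hsq : (Real.sqrt D)⁻¹ * (Real.sqrt D)⁻¹ = (D : ℝ)⁻¹ := by
    rw [← mul_inv, Real.mul_self_sqrt D.cast_nonneg]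
  rw [ancillaTangent_eq_smul_vec, ancillaTangent_eq_smul_vec, star_smul, star_trivial,
    smul_dotProduct, dotProduct_smul, star_vec_dotProduct_vec, smul_smul, hsq, Complex.real_smul,
    Complex.ofReal_inv, Complex.ofReal_natCast]

theorem quantumGeometricTensor_ancillaTangent :
    quantumGeometricTensor (maxEnt D) (ancillaTangent D H) (ancillaTangent D K) =
      (D : ℂ)⁻¹ * (Hᴴ * K).trace - ((D : ℂ)⁻¹ * Hᴴ.trace) * ((D : ℂ)⁻¹ * K.trace) := by
  simp only [quantumGeometricTensor, ← ancillaTangent_one,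
    star_ancillaTangent_dotProduct_ancillaTangent, conjTranspose_one, Matrix.mul_one,
    Matrix.one_mul]

variable {H K}

theorem isSelfAdjoint_quantumGeometricTensor_ancillaTangent
    (hH : H.IsHermitian) (hK : K.IsHermitian) :
    IsSelfAdjoint
      (quantumGeometricTensor (maxEnt D) (ancillaTangent D H) (ancillaTangent D K)) := by
  have hD : IsSelfAdjoint (D : ℂ)⁻¹ := (IsSelfAdjoint.natCast D).inv₀
  rw [quantumGeometricTensor_ancillaTangent, hH.eq]
  exact (hD.mul (isSelfAdjoint_trace_mul_of_isHermitian hH hK)).sub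
    ((hD.mul (isSelfAdjoint_trace_of_isHermitian hH)).mul
      (hD.mul (isSelfAdjoint_trace_of_isHermitian hK)))

theorem maximally_entangled_ancilla_compatibility_general
    (hH : H.IsHermitian) (hK : K.IsHermitian) :
    (quantumGeometricTensor (maxEnt D) (ancillaTangent D H) (ancillaTangent D K)).im = 0 ∧
    quantumGeometricTensor (maxEnt D) (ancillaTangent D H) (ancillaTangent D K) =
      (2 * (D : ℂ))⁻¹ * (H * K + K * H).trace -
        ((D : ℂ)⁻¹ * H.trace) * ((D : ℂ)⁻¹ * K.trace) := by
  constructor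
  · exact Complex.conj_eq_iff_im.mp (isSelfAdjoint_quantumGeometricTensor_ancillaTangent D hH hK)
  · rw [quantumGeometricTensor_ancillaTangent, hH.eq, trace_add, trace_mul_comm K H]
    ring

end MaximallyEntangled

theorem maximally_entangled_ancilla_compatibility (D : ℕ) (hD : 1 ≤ D)
    (H K : Matrix (Fin D) (Fin D) ℂ)
    (hH : H.IsHermitian) (hK : K.IsHermitian)
    (hH0 : H.trace = 0) (hK0 : K.trace = 0) :
    (star (ancillaTangent D H) ⬝ᵥ ancillaTangent D K -
        (star (ancillaTangent D H) ⬝ᵥ maxEnt D) * (star (maxEnt D) ⬝ᵥ ancillaTangent D K)).im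
      = 0 ∧
    star (ancillaTangent D H) ⬝ᵥ ancillaTangent D K -
        (star (ancillaTangent D H) ⬝ᵥ maxEnt D) * (star (maxEnt D) ⬝ᵥ ancillaTangent D K) =
      ((2 * (D : ℝ))⁻¹ : ℂ) * (H * K + K * H).trace := by
  simpa [quantumGeometricTensor, hH0] using
    maximally_entangled_ancilla_compatibility_general D hH hK
end

section
/- Let D ≥ 2, let C be a D×D complex skew-Hermitian matrix, let S be a nonempty finite index set, and for each j ∈ S let a_j ∈ ℝ, ε_j ∈ {+1, −1}, φ¹_j, φ²_j ∈ ℝ, and let u_j, w_j ∈ ℂ^D be vectors with C u_j = i ε_j a_j u_j, C w_j = −i ε_j a_j w_j, and such that the family {u_j}_{j∈S} is orthonormal and the family {w_j}_{j∈S} is orthonormal. Define ψ₁ := (1/√|S|) Σ_{j∈S} e^{iφ¹_j} u_j and ψ₂ := (1/√|S|) Σ_{j∈S} e^{iφ²_j} w_j. Then ⟨ψ₁, Cψ₁⟩ + ⟨ψ₂, Cψ₂⟩ = 0. (Generalized anti-parallel spin strategy: taking C = [H₁^eff(θ), H₂^eff(θ)], the separable probe ψ₁ ⊗ ψ₂ satisfies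 the compatibility condition ⟨ψ₁|[H₁,H₂]|ψ₁⟩ + ⟨ψ₂|[H₁,H₂]|ψ₂⟩ = 0, hence A(θ) = 0 and the two-parameter model is fully compatible.) -/
open Matrix
open scoped BigOperators

/-!
On a superposition of orthonormal eigenvectors of `C` the cross terms of the quadratic form of `C`
vanish, so each eigenvector contributes its eigenvalue times the squared modulus of its coefficient
and the phases drop out. The two probes carry the same moduli on opposite eigenvalues, hence their
contributions cancel term by term.
-/

section QuadraticForm

variable {R n ι : Type*} [Fintype n] [Fintype ι]

theorem star_sum_dotProduct_mulVec_sum_of_pairwise [CommSemiring R] [StarRing R]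
    {C : Matrix n n R} {v : ι → n → R} {l : ι → R}
    (hv : ∀ j, C *ᵥ v j = l j • v j) (horth : Pairwise fun j k ↦ star (v j) ⬝ᵥ v k = 0) :
    star (∑ j, v j) ⬝ᵥ C *ᵥ ∑ j, v j = ∑ j, l j * (star (v j) ⬝ᵥ v j) :=
  calc star (∑ j, v j) ⬝ᵥ C *ᵥ ∑ j, v j
      = ∑ j, l j * ∑ k, star (v k) ⬝ᵥ v j := by
        simp only [mulVec_sum, hv, star_sum, sum_dotProduct, dotProduct_sum, dotProduct_smul,
          smul_eq_mul]
    _ = ∑ j, l j * (star (v j) ⬝ᵥ v j) :=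
        Finset.sum_congr rfl fun j _ ↦
          congrArg (l j * ·) (Fintype.sum_eq_single j fun _ hkj ↦ horth hkj)

variable [DecidableEq ι]

theorem star_sum_smul_dotProduct_mulVec_sum_smul_of_orthonormal [CommSemiring R] [StarRing R]
    {C : Matrix n n R} {v : ι → n → R} {l : ι → R} (hv : ∀ j, C *ᵥ v j = l j • v j)
    (hON : ∀ j k, star (v j) ⬝ᵥ v k = if j = k then 1 else 0) (c : ι → R) :
    star (∑ j, c j • v j) ⬝ᵥ C *ᵥ ∑ j, c j • v j = ∑ j, l j * (star (c j) * c j) := by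
  have dotProduct_smul_smul (j k : ι) :
      star (c j • v j) ⬝ᵥ (c k • v k) = if j = k then star (c j) * c k else 0 := by
    rw [star_smul, smul_dotProduct, dotProduct_smul, smul_smul, hON, smul_eq_mul, mul_ite,
      mul_one, mul_zero]
  have eigenvector_smul (j : ι) : C *ᵥ (c j • v j) = l j • c j • v j := by
    rw [mulVec_smul, hv, smul_comm]
  have horth : Pairwise fun j k ↦ star (c j • v j) ⬝ᵥ (c k • v k) = 0 :=
    fun j k hjk ↦ (dotProduct_smul_smul j k).trans (if_neg hjk)
  simp only [star_sum_dotProduct_mulVec_sum_of_pairwise eigenvector_smul horth,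
    dotProduct_smul_smul, if_true]

theorem generalized_antiparallel_spin_compatibility_general [CommRing R] [StarRing R]
    {C : Matrix n n R} {u w : ι → n → R} {l c d : ι → R}
    (hu : ∀ j, C *ᵥ u j = l j • u j) (hw : ∀ j, C *ᵥ w j = -l j • w j)
    (huON : ∀ j k, star (u j) ⬝ᵥ u k = if j = k then 1 else 0)
    (hwON : ∀ j k, star (w j) ⬝ᵥ w k = if j = k then 1 else 0)
    (hcd : ∀ j, star (c j) * c j = star (d j) * d j) :
    star (∑ j, c j • u j) ⬝ᵥ C *ᵥ (∑ j, c j • u j) +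
      star (∑ j, d j • w j) ⬝ᵥ C *ᵥ (∑ j, d j • w j) = 0 := by
  rw [star_sum_smul_dotProduct_mulVec_sum_smul_of_orthonormal hu huON,
    star_sum_smul_dotProduct_mulVec_sum_smul_of_orthonormal hw hwON]
  simp only [hcd, neg_mul, Finset.sum_neg_distrib, add_neg_cancel]

end QuadraticForm

theorem generalized_antiparallel_spin_compatibility
    (D : ℕ) (hD : 2 ≤ D) (C : Matrix (Fin D) (Fin D) ℂ) (hC : Cᴴ = -C)
    (ι : Type) [Fintype ι] [DecidableEq ι] [Nonempty ι]
    (a : ι → ℝ) (ε : ι → ℝ) (hε : ∀ j, ε j = 1 ∨ ε j = -1)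
    (φ₁ φ₂ : ι → ℝ) (u w : ι → Fin D → ℂ)
    (hu : ∀ j, C.mulVec (u j) = (Complex.I * (ε j : ℝ) * (a j : ℝ)) • u j)
    (hw : ∀ j, C.mulVec (w j) = (-(Complex.I * (ε j : ℝ) * (a j : ℝ))) • w j)
    (huON : ∀ j k, star (u j) ⬝ᵥ u k = if j = k then 1 else 0)
    (hwON : ∀ j k, star (w j) ⬝ᵥ w k = if j = k then 1 else 0) :
    star ((((Real.sqrt (Fintype.card ι))⁻¹ : ℝ) : ℂ) •
          ∑ j, Complex.exp (Complex.I * (φ₁ j : ℝ)) • u j) ⬝ᵥ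
        C.mulVec ((((Real.sqrt (Fintype.card ι))⁻¹ : ℝ) : ℂ) •
          ∑ j, Complex.exp (Complex.I * (φ₁ j : ℝ)) • u j) +
      star ((((Real.sqrt (Fintype.card ι))⁻¹ : ℝ) : ℂ) •
          ∑ j, Complex.exp (Complex.I * (φ₂ j : ℝ)) • w j) ⬝ᵥ
        C.mulVec ((((Real.sqrt (Fintype.card ι))⁻¹ : ℝ) : ℂ) •
          ∑ j, Complex.exp (Complex.I * (φ₂ j : ℝ)) • w j) = 0 := by
  simp only [Finset.smul_sum, smul_smul]
  exact generalized_antiparallel_spin_compatibility_general hu hw huON hwON fun j ↦ by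
    simp only [Complex.star_def, Complex.conj_mul', norm_mul, Complex.norm_exp_I_mul_ofReal]
end
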